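/- Let 0 < ε ≤ 1/600 and r₀ > 0. Then every (ε, r₀)-Reifenberg-flat domain Ω ⊆ ℝ^N satisfies the (1/450, r₀/7)-Jones-flatness condition: for any x, y ∈ Ω with d(x,y) ≤ r₀/7 there is a rectifiable curve γ ⊆ Ω connecting x and y such that H¹(γ) ≤ 450·d(x,y) and d(z, ℝ^N∖Ω) ≥ (1/450)·d(z,x)d(z,y)/d(x,y) for every z ∈ γ. -/

import Mathlib

open Metric MeasureTheory Set Filter
open scoped ENNReal InnerProductSpace NNReal Topology

noncomputable section

/-- An `(ε, r₀)`-Reifenberg-flat domain in `ℝ^N`: a nonempty open set such that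
(i) at every boundary point and every scale `r ≤ r₀` the boundary is `ε r`-close in
Hausdorff distance to a hyperplane through the point, and (ii) at scale `r₀` the two
connected components of the complement of the `2 ε r₀`-neighborhood of the hyperplane
inside the ball lie in `Ω` and in `Ωᶜ` respectively. -/
def IsReifenbergFlat {N : ℕ} (ε r₀ : ℝ) (Ω : Set (EuclideanSpace ℝ (Fin N))) : Prop :=
  Ω.Nonempty ∧ IsOpen Ω ∧
    (∀ x ∈ frontier Ω, ∀ r : ℝ, 0 < r → r ≤ r₀ →
      ∃ ν : EuclideanSpace ℝ (Fin N), ‖ν‖ = 1 ∧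
        Metric.hausdorffDist (frontier Ω ∩ Metric.ball x r)
          ({y | ⟪ν, y - x⟫_ℝ = 0} ∩ Metric.ball x r) ≤ ε * r) ∧
    (∀ x ∈ frontier Ω,
      ∃ ν : EuclideanSpace ℝ (Fin N), ‖ν‖ = 1 ∧
        Metric.hausdorffDist (frontier Ω ∩ Metric.ball x r₀)
          ({y | ⟪ν, y - x⟫_ℝ = 0} ∩ Metric.ball x r₀) ≤ ε * r₀ ∧
        {y | 2 * ε * r₀ ≤ ⟪ν, y - x⟫_ℝ} ∩ Metric.ball x r₀ ⊆ Ω ∧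
        {y | ⟪ν, y - x⟫_ℝ ≤ -(2 * ε * r₀)} ∩ Metric.ball x r₀ ⊆ Ωᶜ)

/-! Separation of the two sides at one scale, together with flatness at the next one, gives
separation at scale half as large: the old normal is nearly orthogonal to the new hyperplane, so
each new cap still contains a point on the known side, and a connected cap that misses `∂Ω` lies
on one side. Hence the sides are separated at all scales up to `r₀`.

If `x` is close to a boundary point `p`, the points `p + (r / 2) • ν_r` along dyadic scales `r`,
joined by segments, form a carrot from `x` to a point at depth comparable to `dist x y`: a ball
contained in `Ω` must be centered high above the hyperplane, and the points high above it form a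
convex set. Doing the same from `y`, a last segment at scale `5 * dist x y` joins the two tops. -/

section Joining

variable {X : Type*} [MetricSpace X] [MeasurableSpace X] [BorelSpace X]
  {x y z : X} {G G' : Set X} {L L' : ℝ}

/-- `x` and `y` are joined by a path inside `G` whose image has `H¹`-measure at most `L`. The
measure of the image is used instead of the length of the parametrization, as in the statement of
Jones-flatness. -/
def JoinedWithin (x y : X) (G : Set X) (L : ℝ) : Prop :=
  ∃ γ : Path x y, range γ ⊆ G ∧ μH[1] (range γ) ≤ ENNReal.ofReal L

lemma JoinedWithin.symm (h : JoinedWithin x y G L) : JoinedWithin y x G L := by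
  obtain ⟨γ, hG, hL⟩ := h
  exact ⟨γ.symm, by rwa [Path.symm_range], by rwa [Path.symm_range]⟩

lemma JoinedWithin.trans (hL : 0 ≤ L) (hL' : 0 ≤ L') (h : JoinedWithin x y G L)
    (h' : JoinedWithin y z G L') : JoinedWithin x z G (L + L') := by
  obtain ⟨γ, hγ, hγL⟩ := h
  obtain ⟨η, hη, hηL⟩ := h'
  refine ⟨γ.trans η, ?_, ?_⟩ <;> rw [Path.trans_range]
  · exact union_subset hγ hη
  · rw [ENNReal.ofReal_add hL hL']
    exact (measure_union_le _ _).trans (add_le_add hγL hηL)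

lemma JoinedWithin.mono (h : JoinedWithin x y G L) (hG : G ⊆ G') (hL : L ≤ L') :
    JoinedWithin x y G' L' := by
  obtain ⟨γ, hγ, hγL⟩ := h
  exact ⟨γ, hγ.trans hG, hγL.trans (ENNReal.ofReal_le_ofReal hL)⟩

lemma joinedWithin_of_segment_subset {E : Type*} [NormedAddCommGroup E] [NormedSpace ℝ E]
    [MeasurableSpace E] [BorelSpace E] {x y : E} {G : Set E} {L : ℝ}
    (hG : segment ℝ x y ⊆ G) (hL : dist x y ≤ L) : JoinedWithin x y G L := by
  refine ⟨Path.segment x y, ?_, ?_⟩ <;> rw [Path.range_segment]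
  · exact hG
  · rw [hausdorffMeasure_segment, edist_dist]
    exact ENNReal.ofReal_le_ofReal hL

/-- The paper's `(1 / K, R)`-Jones-flatness condition. The curve is a parametrization over
`[0, 1]`, and the lower bound on the distance to `Ωᶜ` is stated in `ℝ≥0∞` so that it is also
correct when `Ωᶜ` is empty. -/
def IsJonesFlat (K R : ℝ) (Ω : Set X) : Prop :=
  ∀ x ∈ Ω, ∀ y ∈ Ω, dist x y ≤ R →
    ∃ f : ℝ → X,
      ContinuousOn f (Icc 0 1) ∧ f 0 = x ∧ f 1 = y ∧
      f '' Icc 0 1 ⊆ Ω ∧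
      μH[1] (f '' Icc 0 1) ≤ ENNReal.ofReal (K * dist x y) ∧
      ∀ z ∈ f '' Icc 0 1,
        ENNReal.ofReal ((1 / K) * (dist z x * dist z y / dist x y)) ≤ infEDist z Ωᶜ

lemma IsJonesFlat.mono {K K' R R' : ℝ} {Ω : Set X} (h : IsJonesFlat K R Ω) (hK : 0 < K)
    (hKK' : K ≤ K') (hR : R' ≤ R) : IsJonesFlat K' R' Ω := by
  intro x hx y hy hxy
  obtain ⟨f, hf, hf0, hf1, hfΩ, hlen, hclear⟩ := h x hx y hy (hxy.trans hR)
  refine ⟨f, hf, hf0, hf1, hfΩ, hlen.trans ?_, fun z hz => le_trans ?_ (hclear z hz)⟩ <;> gcongr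

end Joining

section JonesRegion

variable {X : Type*} [MetricSpace X] {K : ℝ} {Ω : Set X} {x y z : X}

/-- The points of `Ω` where a curve from `x` to `y` witnessing `(1 / K, ·)`-Jones-flatness may
run. -/
def jonesRegion (K : ℝ) (Ω : Set X) (x y : X) : Set X :=
  {z ∈ Ω | ball z ((1 / K) * (dist z x * dist z y / dist x y)) ⊆ Ω}

lemma jonesRegion_comm : jonesRegion K Ω x y = jonesRegion K Ω y x := by
  simp only [jonesRegion, mul_comm (dist _ x), dist_comm x y]

lemma mem_jonesRegion_of_ball_subset (hK : 0 < K) (hz : z ∈ Ω) {s : ℝ} (hs : 0 ≤ s)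
    (hball : ball z s ⊆ Ω) (h : dist z x * dist z y ≤ K * s * dist x y) :
    z ∈ jonesRegion K Ω x y := by
  refine ⟨hz, (ball_subset_ball ?_).trans hball⟩
  rw [one_div_mul_eq_div, div_le_iff₀' hK]
  exact div_le_of_le_mul₀ dist_nonneg (by positivity) h

lemma isJonesFlat_of_joinedWithin [MeasurableSpace X] [BorelSpace X] {R : ℝ}
    (h : ∀ x ∈ Ω, ∀ y ∈ Ω, dist x y ≤ R →
      JoinedWithin x y (jonesRegion K Ω x y) (K * dist x y)) : IsJonesFlat K R Ω := by
  intro x hx y hy hxy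
  obtain ⟨γ, hγ, hlen⟩ := h x hx y hy hxy
  refine ⟨γ.extend, γ.continuous_extend.continuousOn, γ.extend_zero, γ.extend_one, ?_⟩
  rw [γ.image_extend_of_subset subset_rfl]
  refine ⟨fun z hz => (hγ hz).1, hlen, fun z hz => le_infEDist.2 fun w hw => ?_⟩
  rw [edist_dist]
  refine ENNReal.ofReal_le_ofReal (not_lt.1 fun hlt => hw ((hγ hz).2 ?_))
  rwa [mem_ball']

/-- The points `z ∈ Ω` at distance at most `ρ` from `x` that are centers of balls in `Ω` of radius
`c * dist z x`. Curves running in it from `x` are the carrots of John domains. -/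
def carrot (Ω : Set X) (x : X) (c ρ : ℝ) : Set X :=
  {z ∈ Ω | ball z (c * dist z x) ⊆ Ω ∧ dist z x ≤ ρ}

lemma carrot_mono {c ρ ρ' : ℝ} (hρ : ρ ≤ ρ') : carrot Ω x c ρ ⊆ carrot Ω x c ρ' :=
  fun _ hz => ⟨hz.1, hz.2.1, hz.2.2.trans hρ⟩

lemma carrot_subset_jonesRegion {c ρ : ℝ} (hK : 0 < K) (hc : 0 ≤ c)
    (h : ρ + dist x y ≤ K * c * dist x y) : carrot Ω x c ρ ⊆ jonesRegion K Ω x y := by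
  rintro z ⟨hz, hball, hzx⟩
  refine mem_jonesRegion_of_ball_subset hK hz (by positivity) hball ?_
  calc dist z x * dist z y ≤ dist z x * (K * c * dist x y) := by
        gcongr
        linarith [dist_triangle z x y]
    _ = K * (c * dist z x) * dist x y := by ring

end JonesRegion

lemma segment_subset_jonesRegion {E : Type*} [NormedAddCommGroup E] [NormedSpace ℝ E]
    {K : ℝ} (hK : 1 ≤ K) {Ω : Set E} {x y : E} (hy : y ∈ Ω) (hball : ball x (dist x y) ⊆ Ω) :
    segment ℝ x y ⊆ jonesRegion K Ω x y := by
  intro z hz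
  have hsum : dist z x + dist z y = dist x y := by
    rw [dist_comm z x, dist_add_dist_of_mem_segment hz]
  have hzΩ : z ∈ Ω := by
    rcases eq_or_ne z y with rfl | hzy
    · exact hy
    · exact hball (by rw [mem_ball]; linarith [dist_pos.2 hzy])
  refine mem_jonesRegion_of_ball_subset (by linarith) hzΩ (s := dist z y) dist_nonneg
    ((ball_subset_ball' (by linarith)).trans hball) ?_
  calc dist z x * dist z y ≤ dist x y * dist z y := by gcongr; linarith [@dist_nonneg _ _ z y]
    _ = 1 * dist z y * dist x y := by ring
    _ ≤ K * dist z y * dist x y := by gcongr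

section Frontier

lemma subset_of_isPreconnected_of_disjoint_frontier {X : Type*} [TopologicalSpace X]
    {U S : Set X} {a : X} (hU : IsPreconnected U) (hdisj : Disjoint U (frontier S))
    (haU : a ∈ U) (haS : a ∈ S) : U ⊆ S := by
  have hcover : U ⊆ interior S ∪ interior Sᶜ :=
    hdisj.subset_compl_right.trans_eq compl_frontier_eq_union_interior
  have ha : a ∈ interior S :=
    (hcover haU).resolve_right fun h => interior_subset h haS
  exact (hU.subset_left_of_subset_union isOpen_interior isOpen_interior
    (disjoint_compl_right.mono interior_subset interior_subset) hcover ⟨a, haU, ha⟩).trans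
      interior_subset

lemma exists_mem_frontier_dist_lt {E : Type*} [NormedAddCommGroup E] [NormedSpace ℝ E]
    {Ω : Set E} {x : E} {t : ℝ} (hx : x ∈ Ω) (h : ¬ball x t ⊆ Ω) :
    ∃ p ∈ frontier Ω, dist x p < t := by
  by_contra! hfar
  have ht : 0 < t := by
    by_contra! ht
    exact h (by simp [ball_eq_empty.2 ht])
  refine h (subset_of_isPreconnected_of_disjoint_frontier (convex_ball x t).isPreconnected
    (disjoint_left.2 fun p hp hpΩ => ?_) (mem_ball_self ht) hx)
  exact (hfar p hpΩ).not_gt (mem_ball'.1 hp)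

end Frontier

section Cap

variable {E : Type*} [NormedAddCommGroup E] [InnerProductSpace ℝ E]
  {Ω S : Set E} {p x A B z ν μ : E} {h h' r r' s t ε δ r₀ : ℝ}

/-- The part of the ball `B(p, r)` at signed height at least `h` above the hyperplane through `p`
with normal `ν`. The part below the hyperplane is the cap of the opposite normal `-ν`. -/
def cap (ν p : E) (h r : ℝ) : Set E :=
  {y | h ≤ ⟪ν, y - p⟫_ℝ} ∩ ball p r

lemma inner_sub_le_inner_sub_add_dist (hν : ‖ν‖ = 1) (a b p : E) :
    ⟪ν, a - p⟫_ℝ ≤ ⟪ν, b - p⟫_ℝ + dist a b := by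
  have hab : ⟪ν, a - b⟫_ℝ ≤ dist a b := by
    simpa [hν, dist_eq_norm] using real_inner_le_norm ν (a - b)
  rw [← sub_add_sub_cancel a b p, inner_add_right]
  linarith

lemma convex_setOf_le_inner_sub (ν p : E) (h : ℝ) : Convex ℝ {y | h ≤ ⟪ν, y - p⟫_ℝ} := by
  simp only [inner_sub_right, le_sub_iff_add_le]
  exact convex_halfSpace_ge (innerSL ℝ ν).isLinear _

lemma isPreconnected_cap (ν p : E) (h r : ℝ) : IsPreconnected (cap ν p h r) :=
  ((convex_setOf_le_inner_sub ν p h).inter (convex_ball p r)).isPreconnected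

lemma add_smul_mem_cap (hν : ‖ν‖ = 1) (ht : 0 ≤ t) (htr : t < r) (hh : h ≤ t * ⟪μ, ν⟫_ℝ) :
    p + t • ν ∈ cap μ p h r := by
  refine ⟨?_, ?_⟩
  · simpa [inner_smul_right] using hh
  · simpa [norm_smul, hν, abs_of_nonneg ht] using htr

lemma ball_subset_cap (hν : ‖ν‖ = 1) (hh : h + s ≤ ⟪ν, z - p⟫_ℝ) (hr : dist z p + s ≤ r) :
    ball z s ⊆ cap ν p h r := by
  refine fun w hw => ⟨?_, ball_subset_ball' (by linarith) hw⟩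
  have := inner_sub_le_inner_sub_add_dist hν z w p
  rw [mem_ball'] at hw
  change h ≤ ⟪ν, w - p⟫_ℝ
  linarith

/-- The two sides of `Ω` are separated at scale `r` around `p`, at height `h`, by the hyperplane
with unit normal `ν`: the upper cap lies in `Ω` and the lower one in `Ωᶜ`. Condition (ii) of
Reifenberg-flatness is the case `r = r₀`, `h = 2 * ε * r₀`. -/
structure SeparatesAt (Ω : Set E) (p : E) (r h : ℝ) (ν : E) : Prop where
  norm_eq_one : ‖ν‖ = 1
  cap_subset : cap ν p h r ⊆ Ω
  cap_neg_subset : cap (-ν) p h r ⊆ Ωᶜ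

namespace SeparatesAt

lemma dist_add_half_smul_self (hS : SeparatesAt Ω p r h ν) (hr : 0 ≤ r) :
    dist (p + (r / 2) • ν) p = r / 2 := by
  simp [norm_smul, hS.norm_eq_one, abs_of_nonneg hr]

lemma ball_add_half_smul_subset (hS : SeparatesAt Ω p r h ν) (hr : 0 ≤ r) (hh : 0 ≤ h) :
    ball (p + (r / 2) • ν) (r / 2 - h) ⊆ Ω := by
  refine (ball_subset_cap hS.norm_eq_one ?_ ?_).trans hS.cap_subset
  · simp [inner_smul_right, hS.norm_eq_one]
  · rw [hS.dist_add_half_smul_self hr]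
    linarith

lemma sub_le_inner_of_ball_subset (hS : SeparatesAt Ω p r h ν) (hs : 0 < s)
    (hA : ball A s ⊆ Ω) (hAp : dist A p + s ≤ r) : s - h ≤ ⟪ν, A - p⟫_ℝ := by
  by_contra! hlow
  -- Moving `A` down by `t < s` reaches the lower cap without leaving `ball A s`.
  set t := max (⟪ν, A - p⟫_ℝ + h) 0
  have hts : t < s := max_lt (by linarith) hs
  have hdist : dist (A - t • ν) A = t := by
    simp [norm_smul, hS.norm_eq_one, t]
  have hmem : A - t • ν ∈ cap (-ν) p h r := by
    refine ⟨?_, ?_⟩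
    · have : ⟪ν, A - t • ν - p⟫_ℝ = ⟪ν, A - p⟫_ℝ - t := by
        simp only [inner_sub_right, inner_smul_right, real_inner_self_eq_norm_sq,
          hS.norm_eq_one]
        ring
      change h ≤ ⟪-ν, A - t • ν - p⟫_ℝ
      rw [inner_neg_left, this]
      linarith [le_max_left (⟪ν, A - p⟫_ℝ + h) 0]
    · rw [mem_ball]
      linarith [dist_triangle (A - t • ν) A p]
  exact hS.cap_neg_subset hmem (hA (by rwa [mem_ball, hdist]))

lemma ball_subset_of_mem_segment (hS : SeparatesAt Ω p r h ν) (hh : 0 ≤ h) (hs : 0 < s)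
    (hA : ball A s ⊆ Ω) (hAp : dist A p + s ≤ r) (hB : ball B s ⊆ Ω) (hBp : dist B p + s ≤ r)
    (hz : z ∈ segment ℝ A B) : ball z (s - 2 * h) ⊆ Ω := by
  have hconv : Convex ℝ ({y | s - h ≤ ⟪ν, y - p⟫_ℝ} ∩ closedBall p (r - s)) :=
    (convex_setOf_le_inner_sub ν p _).inter (convex_closedBall p _)
  obtain ⟨hheight, hzp⟩ := hconv.segment_subset
    ⟨hS.sub_le_inner_of_ball_subset hs hA hAp, mem_closedBall.2 (by linarith)⟩
    ⟨hS.sub_le_inner_of_ball_subset hs hB hBp, mem_closedBall.2 (by linarith)⟩ hz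
  rw [mem_ofPred_eq] at hheight
  rw [mem_closedBall] at hzp
  exact (ball_subset_cap hS.norm_eq_one (by linarith) (by linarith)).trans hS.cap_subset

end SeparatesAt

section Descent

lemma cap_subset_of_frontier_inner_lt (hν : ‖ν‖ = 1) (hcap : cap ν p h r ⊆ S) (hr' : 0 < r')
    (hrr' : r' ≤ r) (hfr : ∀ b ∈ frontier S, dist b p < r' → ⟪μ, b - p⟫_ℝ < h')
    (hh : h ≤ r' / 2) (hh' : h' ≤ r' / 2 * ⟪μ, ν⟫_ℝ) : cap μ p h' r' ⊆ S := by
  refine subset_of_isPreconnected_of_disjoint_frontier (a := p + (r' / 2) • ν)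
    (isPreconnected_cap μ p h' r')
    (disjoint_left.2 fun b hb hbS => (hfr b hbS hb.2).not_ge hb.1)
    (add_smul_mem_cap hν (by linarith) (by linarith) hh') (hcap ?_)
  refine add_smul_mem_cap hν (by linarith) (by linarith) ?_
  simpa [hν] using hh

lemma SeparatesAt.of_abs_inner_lt (hS : SeparatesAt Ω p r h ν) (hr' : 0 < r') (hrr' : r' ≤ r)
    (hμ : ‖μ‖ = 1) (hfr : ∀ b ∈ frontier Ω, dist b p < r' → |⟪μ, b - p⟫_ℝ| < h')
    (hh : h ≤ r' / 2) (hh' : h' ≤ r' / 2 * ⟪μ, ν⟫_ℝ) : SeparatesAt Ω p r' h' μ where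
  norm_eq_one := hμ
  cap_subset := cap_subset_of_frontier_inner_lt hS.norm_eq_one hS.cap_subset hr' hrr'
    (fun b hb hbp => (abs_lt.1 (hfr b hb hbp)).2) hh hh'
  cap_neg_subset := cap_subset_of_frontier_inner_lt (ν := -ν) (by rw [norm_neg, hS.norm_eq_one])
    hS.cap_neg_subset hr' hrr'
    (fun b hb hbp => by
      rw [frontier_compl] at hb
      rw [inner_neg_left]
      linarith [(abs_lt.1 (hfr b hb hbp)).1])
    hh (by rwa [inner_neg_neg])

variable {F : Set E}

lemma hausdorffEDist_inter_ball_hyperplane_ne_top (hp : p ∈ F) (hr : 0 < r) (μ : E) :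
    hausdorffEDist (F ∩ ball p r) ({y | ⟪μ, y - p⟫_ℝ = 0} ∩ ball p r) ≠ ⊤ :=
  hausdorffEDist_ne_top_of_nonempty_of_bounded ⟨p, hp, mem_ball_self hr⟩
    ⟨p, by simp, mem_ball_self hr⟩ (isBounded_ball.subset inter_subset_right)
    (isBounded_ball.subset inter_subset_right)

lemma abs_inner_lt_of_hausdorffDist_lt (hp : p ∈ F) (hr : 0 < r) (hμ : ‖μ‖ = 1)
    (hδ : hausdorffDist (F ∩ ball p r) ({y | ⟪μ, y - p⟫_ℝ = 0} ∩ ball p r) < δ)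
    {b : E} (hb : b ∈ F) (hbp : dist b p < r) : |⟪μ, b - p⟫_ℝ| < δ := by
  obtain ⟨y, ⟨hy, -⟩, hby⟩ := exists_dist_lt_of_hausdorffDist_lt (mem_inter hb hbp) hδ
    (hausdorffEDist_inter_ball_hyperplane_ne_top hp hr μ)
  rw [mem_ofPred_eq] at hy
  have h₁ := inner_sub_le_inner_sub_add_dist hμ b y p
  have h₂ := inner_sub_le_inner_sub_add_dist hμ y b p
  rw [dist_comm y b] at h₂
  exact abs_lt.2 ⟨by linarith, by linarith⟩

/-- The component `w` of `ν` orthogonal to `μ` satisfies `⟪ν, w⟫ = ‖w‖ ^ 2 = 1 - ⟪μ, ν⟫ ^ 2`, and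
the point `p + (r / 2) • w` of the hyperplane normal to `μ` is close to `F`. -/
lemma one_sub_inner_sq_lt_of_hausdorffDist_lt (hp : p ∈ F) (hr : 0 < r) (hν : ‖ν‖ = 1)
    (hμ : ‖μ‖ = 1)
    (hδ : hausdorffDist (F ∩ ball p r) ({y | ⟪μ, y - p⟫_ℝ = 0} ∩ ball p r) < δ)
    (hF : ∀ b ∈ F, dist b p < r → ⟪ν, b - p⟫_ℝ < h) :
    r / 2 * (1 - ⟪μ, ν⟫_ℝ ^ 2) < h + δ := by
  set w := ν - ⟪μ, ν⟫_ℝ • μ with hw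
  have hμw : ⟪μ, w⟫_ℝ = 0 := by
    simp [hw, inner_sub_right, inner_smul_right, hμ]
  have hνw : ⟪ν, w⟫_ℝ = 1 - ⟪μ, ν⟫_ℝ ^ 2 := by
    simp only [hw, inner_sub_right, inner_smul_right, real_inner_self_eq_norm_sq, hν,
      real_inner_comm μ ν]
    ring
  have hw_sq : ‖w‖ ^ 2 = 1 - ⟪μ, ν⟫_ℝ ^ 2 := by
    rw [← hνw, ← real_inner_self_eq_norm_sq, hw, inner_sub_left, ← hw, inner_smul_left, hμw,
      mul_zero, sub_zero]
  have hw_le : ‖w‖ ≤ 1 := by nlinarith [sq_nonneg ⟪μ, ν⟫_ℝ]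
  have hy : p + (r / 2) • w ∈ {y | ⟪μ, y - p⟫_ℝ = 0} ∩ ball p r := by
    refine ⟨by simp [inner_smul_right, hμw], ?_⟩
    rw [mem_ball, dist_self_add_left, norm_smul, Real.norm_of_nonneg (by linarith)]
    nlinarith
  obtain ⟨b, ⟨hb, hbp⟩, hby⟩ := exists_dist_lt_of_hausdorffDist_lt' hy hδ
    (hausdorffEDist_inter_ball_hyperplane_ne_top hp hr μ)
  calc r / 2 * (1 - ⟪μ, ν⟫_ℝ ^ 2) = ⟪ν, p + (r / 2) • w - p⟫_ℝ := by
        rw [add_sub_cancel_left, inner_smul_right, hνw]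
    _ ≤ ⟪ν, b - p⟫_ℝ + dist (p + (r / 2) • w) b := inner_sub_le_inner_sub_add_dist hν _ _ _
    _ < h + δ := by
        rw [dist_comm]
        exact add_lt_add (hF b hb hbp) hby

lemma SeparatesAt.exists_of_le_two_mul (hS : SeparatesAt Ω p r (2 * ε * r) ν) (hε : 0 < ε)
    (hε' : ε ≤ 1 / 32) (hΩ : IsOpen Ω) (hp : p ∈ frontier Ω) (hr' : 0 < r') (hrr' : r' ≤ r)
    (hr2 : r ≤ 2 * r') (hμ : ‖μ‖ = 1)
    (hflat : hausdorffDist (frontier Ω ∩ ball p r') ({y | ⟪μ, y - p⟫_ℝ = 0} ∩ ball p r')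
      ≤ ε * r') :
    ∃ ν', SeparatesAt Ω p r' (2 * ε * r') ν' := by
  have hεr' : 0 < ε * r' := mul_pos hε hr'
  have hεr'_le : ε * r' ≤ 1 / 32 * r' := by gcongr
  have hεr_le : ε * r ≤ ε * (2 * r') := by gcongr
  have hδ := hflat.trans_lt (show ε * r' < 2 * ε * r' by linarith)
  have hslab : ∀ b ∈ frontier Ω, dist b p < r' → |⟪μ, b - p⟫_ℝ| < 2 * ε * r' :=
    fun b hb hbp => abs_inner_lt_of_hausdorffDist_lt hp hr' hμ hδ hb hbp
  have hbelow : ∀ b ∈ frontier Ω, dist b p < r' → ⟪ν, b - p⟫_ℝ < 2 * ε * r := by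
    intro b hb hbp
    by_contra! hle
    exact (hΩ.frontier_eq ▸ hb).2 (hS.cap_subset ⟨hle, hbp.trans_le hrr'⟩)
  have halign : 1 / 4 < ⟪μ, ν⟫_ℝ ^ 2 := by
    have := one_sub_inner_sq_lt_of_hausdorffDist_lt hp hr' hS.norm_eq_one hμ hδ hbelow
    nlinarith
  rcases le_total 0 ⟪μ, ν⟫_ℝ with hsign | hsign
  · have hhalf : 1 / 2 < ⟪μ, ν⟫_ℝ := by nlinarith
    exact ⟨μ, hS.of_abs_inner_lt hr' hrr' hμ hslab (by linarith) (by nlinarith)⟩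
  · have hhalf : 1 / 2 < -⟪μ, ν⟫_ℝ := by nlinarith
    refine ⟨-μ, hS.of_abs_inner_lt hr' hrr' (by rwa [norm_neg]) ?_ (by linarith) ?_⟩
    · simpa only [inner_neg_left, abs_neg] using hslab
    · rw [inner_neg_left]
      nlinarith

lemma exists_separatesAt_of_le (hε : 0 < ε) (hε' : ε ≤ 1 / 32) (hΩ : IsOpen Ω)
    (hp : p ∈ frontier Ω)
    (hflat : ∀ r, 0 < r → r ≤ r₀ → ∃ μ : E, ‖μ‖ = 1 ∧
      hausdorffDist (frontier Ω ∩ ball p r) ({y | ⟪μ, y - p⟫_ℝ = 0} ∩ ball p r) ≤ ε * r)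
    (hsep : ∃ ν, SeparatesAt Ω p r₀ (2 * ε * r₀) ν) (hr : 0 < r) (hrr₀ : r ≤ r₀) :
    ∃ ν, SeparatesAt Ω p r (2 * ε * r) ν := by
  obtain ⟨n, hn⟩ := pow_unbounded_of_one_lt (r₀ / r) one_lt_two
  rw [div_lt_iff₀ hr] at hn
  induction n generalizing r with
  | zero =>
    obtain rfl : r = r₀ := by linarith
    exact hsep
  | succ n ih =>
    rcases le_total r₀ (2 * r) with hle | hle
    · obtain ⟨ν, hν⟩ := hsep
      obtain ⟨μ, hμ, hd⟩ := hflat r hr hrr₀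
      exact hν.exists_of_le_two_mul hε hε' hΩ hp hr hrr₀ hle hμ hd
    · obtain ⟨ν, hν⟩ := ih (r := 2 * r) (by linarith) hle (by rw [pow_succ] at hn; linarith)
      obtain ⟨μ, hμ, hd⟩ := hflat r hr hrr₀
      exact hν.exists_of_le_two_mul hε hε' hΩ hp hr (by linarith) le_rfl hμ hd

end Descent

section Climb

lemma SeparatesAt.segment_subset_carrot (hS : SeparatesAt Ω p r (2 * ε * r) ν) (hε : 0 ≤ ε)
    (hε' : ε ≤ 1 / 32) (hr : 0 < r) (hB : ball B (r / 4 - ε * r) ⊆ Ω)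
    (hBp : dist B p ≤ 3 / 4 * r) (hxp : dist x p ≤ 3 / 4 * r) :
    segment ℝ B (p + (r / 2) • ν) ⊆ carrot Ω x (1 / 16) (3 / 2 * r) := by
  intro z hz
  have hεr : 0 ≤ ε * r := by positivity
  have hεr_le : ε * r ≤ 1 / 32 * r := by gcongr
  have htop := hS.dist_add_half_smul_self hr.le
  -- The radius is `(1 / 4 - 5 * ε) * r ≥ 3 / 32 * r`.
  have hball : ball z (r / 4 - ε * r - 2 * (2 * ε * r)) ⊆ Ω :=
    hS.ball_subset_of_mem_segment (by linarith) (by linarith) hB (by linarith)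
      ((ball_subset_ball (by linarith)).trans (hS.ball_add_half_smul_subset hr.le (by linarith)))
      (by linarith) hz
  have hzp : dist z p ≤ 3 / 4 * r :=
    (convex_closedBall p (3 / 4 * r)).segment_subset hBp
      (mem_closedBall.2 (by linarith)) hz
  have hzx : dist z x ≤ 3 / 2 * r := by linarith [dist_triangle_right z x p]
  exact ⟨hball (mem_ball_self (by linarith)),
    (ball_subset_ball (by linarith)).trans hball, hzx⟩

variable [MeasurableSpace E] [BorelSpace E]

lemma SeparatesAt.exists_joinedWithin_carrot (hS : SeparatesAt Ω p r (2 * ε * r) ν) (hε : 0 ≤ ε)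
    (hε' : ε ≤ 1 / 32) (hr : 0 < r) (hB : ball B (r / 4 - ε * r) ⊆ Ω)
    (hBp : dist B p ≤ 3 / 4 * r) (hxp : dist x p ≤ 3 / 4 * r) :
    ∃ A, dist A p ≤ r / 2 ∧ ball A (r / 2 - 2 * ε * r) ⊆ Ω ∧
      JoinedWithin B A (carrot Ω x (1 / 16) (3 / 2 * r)) (dist B p + r / 2) := by
  have htop := hS.dist_add_half_smul_self hr.le
  refine ⟨p + (r / 2) • ν, htop.le, hS.ball_add_half_smul_subset hr.le (by positivity),
    joinedWithin_of_segment_subset (hS.segment_subset_carrot hε hε' hr hB hBp hxp) ?_⟩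
  exact (dist_triangle_right _ _ p).trans_eq (by rw [htop])

lemma exists_joinedWithin_carrot (hε : 0 ≤ ε) (hε' : ε ≤ 1 / 32)
    (hsep : ∀ r, 0 < r → r ≤ r₀ → ∃ ν, SeparatesAt Ω p r (2 * ε * r) ν)
    (hδ : 0 < δ) (hball : ball x δ ⊆ Ω) (hxp : dist x p ≤ 3 / 2 * δ)
    (hδr : 2 * δ ≤ r) (hrr₀ : r ≤ r₀) :
    ∃ A, dist A p ≤ r / 2 ∧ ball A (r / 2 - 2 * ε * r) ⊆ Ω ∧
      JoinedWithin x A (carrot Ω x (1 / 16) (3 / 2 * r)) (3 / 2 * r) := by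
  obtain ⟨n, hn, hn'⟩ := exists_nat_pow_near (x := r / (2 * δ))
    ((one_le_div (by positivity)).2 hδr) one_lt_two
  rw [le_div_iff₀ (by positivity)] at hn
  rw [div_lt_iff₀ (by positivity)] at hn'
  induction n generalizing r with
  | zero =>
    rw [zero_add, pow_one] at hn'
    obtain ⟨ν, hν⟩ := hsep r (by linarith) hrr₀
    have hεr : 0 ≤ ε * r := mul_nonneg hε (by linarith)
    obtain ⟨A, hAp, hA, hxA⟩ := hν.exists_joinedWithin_carrot hε hε' (by linarith)
      ((ball_subset_ball (by linarith)).trans hball) (by linarith)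
      (show dist x p ≤ 3 / 4 * r by linarith)
    exact ⟨A, hAp, hA, hxA.mono subset_rfl (by linarith)⟩
  | succ n ih =>
    rw [pow_succ] at hn hn'
    have hpow : (1 : ℝ) ≤ 2 ^ n := one_le_pow₀ one_le_two
    have hδr' : 2 * δ ≤ r / 2 := by nlinarith
    obtain ⟨B, hBp, hB, hxB⟩ := ih hδr' (by linarith) (by linarith) (by linarith)
    obtain ⟨ν, hν⟩ := hsep r (by linarith) hrr₀
    obtain ⟨A, hAp, hA, hBA⟩ := hν.exists_joinedWithin_carrot hε hε' (by linarith)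
      ((ball_subset_ball (by linarith)).trans hB) (by linarith)
      (show dist x p ≤ 3 / 4 * r by linarith)
    have hxA := (hxB.mono (carrot_mono (by linarith)) le_rfl).trans (by linarith)
      (by linarith [@dist_nonneg _ _ B p]) hBA
    exact ⟨A, hAp, hA, hxA.mono subset_rfl (by linarith)⟩

lemma exists_joinedWithin_carrot_of_not_ball_subset (hε : 0 ≤ ε) (hε' : ε ≤ 1 / 32)
    (hΩ : IsOpen Ω)
    (hsep : ∀ p ∈ frontier Ω, ∀ r, 0 < r → r ≤ r₀ → ∃ ν, SeparatesAt Ω p r (2 * ε * r) ν)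
    (hx : x ∈ Ω) {d : ℝ} (hd : 2 * d ≤ r₀) (hball : ¬ball x d ⊆ Ω) :
    ∃ p ∈ frontier Ω, dist x p < d ∧ ∃ A, dist A p ≤ d ∧ ball A (d - 4 * ε * d) ⊆ Ω ∧
      JoinedWithin x A (carrot Ω x (1 / 16) (3 * d)) (3 * d) := by
  obtain ⟨w, hw, hwΩ⟩ := not_subset.1 hball
  set δ := infDist x Ωᶜ
  have hδ : 0 < δ := (hΩ.isClosed_compl.notMem_iff_infDist_pos ⟨w, hwΩ⟩).1 (not_not.2 hx)
  have hδd : δ < d := (infDist_lt_iff ⟨w, hwΩ⟩).2 ⟨w, hwΩ, mem_ball'.1 hw⟩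
  have hδ' : ¬ball x (min (3 / 2 * δ) d) ⊆ Ω := by
    obtain ⟨v, hv, hxv⟩ := (infDist_lt_iff ⟨w, hwΩ⟩).1
      (show δ < min (3 / 2 * δ) d from lt_min (by linarith) hδd)
    exact fun hsub => hv (hsub (mem_ball'.2 hxv))
  obtain ⟨p, hp, hxp⟩ := exists_mem_frontier_dist_lt hx hδ'
  obtain ⟨hxpδ, hxpd⟩ := lt_min_iff.1 hxp
  obtain ⟨A, hAp, hA, hxA⟩ := exists_joinedWithin_carrot hε hε' (hsep p hp) hδ
    ball_infDist_compl_subset hxpδ.le (show 2 * δ ≤ 2 * d by linarith) hd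
  refine ⟨p, hp, hxpd, A, by linarith, (ball_subset_ball (by linarith)).trans hA,
    hxA.mono (carrot_mono (by linarith)) (by linarith)⟩

end Climb

section Jones

variable {y : E}

lemma SeparatesAt.segment_subset_jonesRegion {d : ℝ}
    (hS : SeparatesAt Ω p (5 * d) (2 * ε * (5 * d)) ν) (hε : 0 ≤ ε) (hε' : ε ≤ 1 / 32)
    (hd : 0 < d) (hxy : dist x y = d) (hxp : dist x p ≤ d)
    (hA : ball A (d - 4 * ε * d) ⊆ Ω) (hAp : dist A p ≤ 4 * d)
    (hB : ball B (d - 4 * ε * d) ⊆ Ω) (hBp : dist B p ≤ 4 * d) :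
    segment ℝ A B ⊆ jonesRegion 120 Ω x y := by
  intro z hz
  have hεd : 0 ≤ ε * d := by positivity
  have hεd_le : ε * d ≤ 1 / 32 * d := by gcongr
  -- The radius obtained is `(1 - 24 * ε) * d`, hence the bound `1 / 32` on `ε`.
  have hball : ball z (d / 4) ⊆ Ω :=
    (ball_subset_ball (by linarith)).trans
      (hS.ball_subset_of_mem_segment (by linarith) (by linarith) hA (by linarith) hB
        (by linarith) hz)
  have hzp : dist z p ≤ 4 * d :=
    (convex_closedBall p (4 * d)).segment_subset hAp hBp hz
  have hzx : dist z x ≤ 5 * d := by linarith [dist_triangle_right z x p]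
  have hzy : dist z y ≤ 6 * d := by linarith [dist_triangle z x y]
  refine mem_jonesRegion_of_ball_subset (by norm_num) (hball (mem_ball_self (by linarith)))
    (by linarith) hball ?_
  calc dist z x * dist z y ≤ (5 * d) * (6 * d) := by gcongr
    _ = 120 * (d / 4) * dist x y := by rw [hxy]; ring

variable [MeasurableSpace E] [BorelSpace E]

lemma joinedWithin_jonesRegion (hε : 0 ≤ ε) (hε' : ε ≤ 1 / 32) (hΩ : IsOpen Ω)
    (hsep : ∀ p ∈ frontier Ω, ∀ r, 0 < r → r ≤ r₀ → ∃ ν, SeparatesAt Ω p r (2 * ε * r) ν)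
    (hx : x ∈ Ω) (hy : y ∈ Ω) (hxy : dist x y ≤ r₀ / 5) :
    JoinedWithin x y (jonesRegion 120 Ω x y) (120 * dist x y) := by
  have hd₀ : 0 ≤ dist x y := dist_nonneg
  by_cases hbx : ball x (dist x y) ⊆ Ω
  · exact joinedWithin_of_segment_subset
      (segment_subset_jonesRegion (by norm_num) hy hbx) (by linarith)
  by_cases hby : ball y (dist x y) ⊆ Ω
  · rw [dist_comm] at hby
    rw [jonesRegion_comm]
    exact (joinedWithin_of_segment_subset
      (segment_subset_jonesRegion (by norm_num) hx hby) (by rw [dist_comm]; linarith)).symm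
  obtain ⟨p, hp, hxp, A, hAp, hA, hxA⟩ := exists_joinedWithin_carrot_of_not_ball_subset
    hε hε' hΩ hsep hx (by linarith) hbx
  obtain ⟨q, -, hyq, B, hBq, hB, hyB⟩ := exists_joinedWithin_carrot_of_not_ball_subset
    hε hε' hΩ hsep hy (by linarith) hby
  have hd : 0 < dist x y := dist_nonneg.trans_lt hxp
  have hBp : dist B p ≤ 4 * dist x y := by
    linarith [dist_triangle B q p, dist_triangle_left q p y, dist_triangle_left y p x]
  obtain ⟨ν, hν⟩ := hsep p hp (5 * dist x y) (by linarith) (by linarith)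
  have hAB : JoinedWithin A B (jonesRegion 120 Ω x y) (5 * dist x y) :=
    joinedWithin_of_segment_subset
      (hν.segment_subset_jonesRegion hε hε' hd rfl hxp.le hA (by linarith) hB hBp)
      (by linarith [dist_triangle_right A B p])
  have hxA' : JoinedWithin x A (jonesRegion 120 Ω x y) (3 * dist x y) :=
    hxA.mono (carrot_subset_jonesRegion (by norm_num) (by norm_num) (by linarith)) le_rfl
  have hyB' : JoinedWithin y B (jonesRegion 120 Ω x y) (3 * dist x y) := by
    rw [dist_comm x y] at hyB hd ⊢
    rw [jonesRegion_comm]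
    exact hyB.mono (carrot_subset_jonesRegion (by norm_num) (by norm_num) (by linarith)) le_rfl
  exact ((hxA'.trans (by linarith) (by linarith) hAB).trans (by linarith) (by linarith)
    hyB'.symm).mono subset_rfl (by linarith)

theorem reifenberg_implies_jones_general (hε : 0 < ε) (hε' : ε ≤ 1 / 32) (hΩ : IsOpen Ω)
    (hflat : ∀ p ∈ frontier Ω, ∀ r, 0 < r → r ≤ r₀ → ∃ μ : E, ‖μ‖ = 1 ∧
      hausdorffDist (frontier Ω ∩ ball p r) ({y | ⟪μ, y - p⟫_ℝ = 0} ∩ ball p r) ≤ ε * r)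
    (hsep : ∀ p ∈ frontier Ω, ∃ ν, SeparatesAt Ω p r₀ (2 * ε * r₀) ν) :
    IsJonesFlat 120 (r₀ / 5) Ω :=
  isJonesFlat_of_joinedWithin fun _ hx _ hy =>
    joinedWithin_jonesRegion hε.le hε' hΩ
      (fun p hp _ => exists_separatesAt_of_le hε hε' hΩ hp (hflat p hp) (hsep p hp)) hx hy

end Jones

end Cap

lemma IsReifenbergFlat.exists_separatesAt {N : ℕ} {ε r₀ : ℝ}
    {Ω : Set (EuclideanSpace ℝ (Fin N))} (hΩ : IsReifenbergFlat ε r₀ Ω)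
    {p : EuclideanSpace ℝ (Fin N)} (hp : p ∈ frontier Ω) :
    ∃ ν, SeparatesAt Ω p r₀ (2 * ε * r₀) ν := by
  obtain ⟨ν, hν, -, hup, hdown⟩ := hΩ.2.2.2 p hp
  refine ⟨ν, hν, hup, fun y ⟨hy, hyr⟩ => hdown ⟨?_, hyr⟩⟩
  rw [mem_ofPred_eq, inner_neg_left] at hy
  exact le_neg_of_le_neg hy

/-- **Theorem (Reifenberg-flat implies Jones-flat).**
Any `(ε, r₀)`-Reifenberg-flat domain with `0 < ε ≤ 1/600` satisfies the
`(1/450, r₀/7)`-Jones-flatness condition: any two points `x, y ∈ Ω` with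
`dist x y ≤ r₀ / 7` are joined by a rectifiable curve `γ ⊆ Ω` with
`H¹(γ) ≤ 450 * dist x y` and `dist (z, Ωᶜ) ≥ (1/450) * dist z x * dist z y / dist x y`
for every `z ∈ γ`. -/
theorem reifenberg_implies_jones {N : ℕ} {ε r₀ : ℝ}
    (hε : 0 < ε) (hε' : ε ≤ 1 / 600) (hr₀ : 0 < r₀)
    {Ω : Set (EuclideanSpace ℝ (Fin N))} (hΩ : IsReifenbergFlat ε r₀ Ω) :
    ∀ x ∈ Ω, ∀ y ∈ Ω, dist x y ≤ r₀ / 7 →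
      ∃ f : ℝ → EuclideanSpace ℝ (Fin N),
        ContinuousOn f (Set.Icc 0 1) ∧ f 0 = x ∧ f 1 = y ∧
        f '' Set.Icc 0 1 ⊆ Ω ∧
        μH[1] (f '' Set.Icc 0 1) ≤ ENNReal.ofReal (450 * dist x y) ∧
        ∀ z ∈ f '' Set.Icc 0 1,
          ENNReal.ofReal ((1 / 450) * (dist z x * dist z y / dist x y)) ≤
            EMetric.infEdist z Ωᶜ := by
  exact (reifenberg_implies_jones_general hε (by linarith) hΩ.2.1 hΩ.2.2.1
    fun _ => hΩ.exists_separatesAt).mono (by norm_num) (by norm_num) (by linarith)
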